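/- arXiv:2112.05830 — 7 statements merged into one kernel-verified Lean document; each statement's English description precedes it below -/
import Mathlib

section
/- Let n ≥ 2 and m ≥ 1 be integers, fix a coupon type α, and let r_c be an integer with r_c ≤ (1/4)·n·log₂ m. If a single collector draws r_c coupons i.i.d. uniformly at random from n coupon types, then the probability that at least one sample equals α is at most 1 − m^{−1/2}; equivalently, the probability that no sample equals α is (1 − 1/n)^{r_c} ≥ m^{−1/2}. -/
open Finset

/-!
The samples avoiding `α` are exactly the functions into `{α}ᶜ`, so there are `(n - 1) ^ r_c` of
them, and their proportion is `(1 - 1 / n) ^ r_c`. Bernoulli's inequality for the exponent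
`2 / n ∈ [0, 1]` gives `(1 / 2) ^ (2 / n) ≤ 1 - 1 / n`; raising this to the power
`r_c ≤ (n / 4) log₂ m` bounds the proportion below by `(1 / 2) ^ ((log₂ m) / 2) = m ^ (-1 / 2)`.
The probability of hitting `α` is the complement.
-/

lemma card_avoid (n r : ℕ) (α : Fin n) :
    (univ.filter (fun f : Fin r → Fin n => ∀ i : Fin r, f i ≠ α)).card = (n - 1) ^ r := by
  have h : univ.filter (fun f : Fin r → Fin n => ∀ i : Fin r, f i ≠ α) =
      Fintype.piFinset (fun _ : Fin r => ({α}ᶜ : Finset (Fin n))) := by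
    ext f
    simp
  rw [h, Fintype.card_piFinset]
  simp [Finset.card_compl]

lemma half_rpow_le (n : ℕ) (hn : 2 ≤ n) :
    (1 / 2 : ℝ) ^ (2 / (n : ℝ)) ≤ 1 - 1 / (n : ℝ) := by
  have hn' : (2 : ℝ) ≤ n := by exact_mod_cast hn
  have h := rpow_one_add_le_one_add_mul_self (s := -1 / 2) (p := 2 / (n : ℝ))
    (by norm_num) (by positivity) (by rw [div_le_one (by linarith)]; exact hn')
  calc (1 / 2 : ℝ) ^ (2 / (n : ℝ)) = (1 + -1 / 2) ^ (2 / (n : ℝ)) := by norm_num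
    _ ≤ _ := h
    _ = _ := by ring

lemma inv_sqrt_le_pow (m n r : ℕ) (hn : 2 ≤ n) (hm : 1 ≤ m)
    (hr : (r : ℝ) ≤ (1 / 4) * n * Real.logb 2 m) :
    (Real.sqrt m)⁻¹ ≤ (1 - 1 / (n : ℝ)) ^ r := by
  have hn0 : (0 : ℝ) < n := by exact_mod_cast (by omega : 0 < n)
  have hm0 : (0 : ℝ) < m := by exact_mod_cast hm
  have hexp : 2 / (n : ℝ) * r ≤ Real.logb 2 m * (1 / 2) := by
    rw [div_mul_eq_mul_div, div_le_iff₀ hn0]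
    linarith
  calc (Real.sqrt m)⁻¹ = (1 / 2 : ℝ) ^ (Real.logb 2 m * (1 / 2)) := by
        rw [one_div, Real.inv_rpow (by norm_num), Real.rpow_mul (by norm_num),
          Real.rpow_logb (by norm_num) (by norm_num) hm0, Real.sqrt_eq_rpow, one_div]
    _ ≤ (1 / 2 : ℝ) ^ (2 / (n : ℝ) * r) :=
        Real.rpow_le_rpow_of_exponent_ge (by norm_num) (by norm_num) hexp
    _ = ((1 / 2 : ℝ) ^ (2 / (n : ℝ))) ^ r := by
        rw [Real.rpow_mul (by norm_num), Real.rpow_natCast]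
    _ ≤ _ := pow_le_pow_left₀ (by positivity) (half_rpow_le n hn) r

/-- A single collector draws `r_c` coupons i.i.d. uniformly from `n ≥ 2` types
(uniform measure on `Fin r_c → Fin n`, probabilities as counting ratios).
If `r_c ≤ (1/4) n log₂ m`, then for a fixed coupon type `α` the probability that
some sample equals `α` is at most `1 - m^{-1/2}`; equivalently, the probability
that no sample equals `α` equals `(1 - 1/n)^{r_c}`, which is at least `m^{-1/2}`. -/
theorem single_collector_hits_coupon_ub
    (m n r_c : ℕ) (hn : 2 ≤ n) (hm : 1 ≤ m)
    (hrc : (r_c : ℝ) ≤ (1 / 4) * n * Real.logb 2 m) (α : Fin n) :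
    ((univ.filter (fun f : Fin r_c → Fin n => ∃ i : Fin r_c, f i = α)).card : ℝ) /
        (Fintype.card (Fin r_c → Fin n) : ℝ) ≤ 1 - (Real.sqrt m)⁻¹ ∧
    ((univ.filter (fun f : Fin r_c → Fin n => ∀ i : Fin r_c, f i ≠ α)).card : ℝ) /
        (Fintype.card (Fin r_c → Fin n) : ℝ) = (1 - 1 / (n : ℝ)) ^ r_c ∧
    (Real.sqrt m)⁻¹ ≤ (1 - 1 / (n : ℝ)) ^ r_c := by
  have hn0 : (n : ℝ) ≠ 0 := by exact_mod_cast (by omega : n ≠ 0)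
  have hpow := inv_sqrt_le_pow m n r_c hn hm hrc
  have havoid : ((univ.filter (fun f : Fin r_c → Fin n => ∀ i : Fin r_c, f i ≠ α)).card : ℝ) /
      (Fintype.card (Fin r_c → Fin n) : ℝ) = (1 - 1 / (n : ℝ)) ^ r_c := by
    rw [card_avoid, Fintype.card_fun, Fintype.card_fin, Fintype.card_fin]
    push_cast [Nat.cast_sub (by omega : 1 ≤ n)]
    rw [← div_pow, sub_div, div_self hn0]
  refine ⟨?_, havoid, hpow⟩
  have hcard := Finset.card_filter_add_card_filter_not (s := univ)
    (fun f : Fin r_c → Fin n => ∃ i : Fin r_c, f i = α)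
  simp only [not_exists, Finset.card_univ] at hcard
  have hcard' : ((univ.filter (fun f : Fin r_c → Fin n => ∃ i : Fin r_c, f i = α)).card : ℝ) +
      ((univ.filter (fun f : Fin r_c → Fin n => ∀ i : Fin r_c, f i ≠ α)).card : ℝ) =
      (Fintype.card (Fin r_c → Fin n) : ℝ) := by exact_mod_cast hcard
  have hN : (Fintype.card (Fin r_c → Fin n) : ℝ) ≠ 0 := by
    rw [Fintype.card_fun, Fintype.card_fin, Fintype.card_fin]
    push_cast
    exact pow_ne_zero _ hn0
  rw [eq_sub_of_add_eq hcard', sub_div, div_self hN, havoid]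
  linarith
end

section
/- Let n ≥ 2 and m ≥ 1 be integers, fix a coupon type α, and let r_c be an integer with r_c ≤ (1/4)·n·log₂ m. If each of m collectors independently draws r_c coupons i.i.d. uniformly at random from n coupon types, then the probability that every collector obtains at least one copy of coupon α is at most (1 − m^{−1/2})^m ≤ e^{−√m}. In particular, the probability that every collector obtains a full set of all n coupon types is at most e^{−√m}. (This is the paper's lower bound showing Ω(n log m) samples per collector are necessary in the no-exchange regime.) -/
/-!
The collectors are independent, and a single one misses `α` with probability `(1 - 1/n) ^ r_c`, so
the probability that all of them obtain `α` is exactly `(1 - (1 - 1/n) ^ r_c) ^ m`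
(`card_all_obtain`). Bernoulli's inequality with real exponent `n / 2 ≥ 1` gives
`(1 - 1/n) ^ (n / 2) ≥ 1/2`; raising this to the power `2 * r_c / n ≤ (1/2) * log₂ m` shows that a
collector misses `α` with probability at least `m ^ (-1/2)` (`inv_sqrt_le_miss`). The exponential
bound is `1 - x ≤ exp (-x)`, and collecting a full set entails collecting `α`.
-/

open Finset

lemma card_one_obtains (n r : ℕ) (α : Fin n) :
    #{g : Fin r → Fin n | ∃ i, g i = α} = n ^ r - (n - 1) ^ r := by
  have h : ({g : Fin r → Fin n | ∃ i, g i = α} : Finset _)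
      = (Fintype.piFinset fun _ : Fin r => univ.erase α)ᶜ := by
    ext g
    simp
  rw [h, card_compl]
  simp

lemma card_all_obtain (m n r : ℕ) (α : Fin n) :
    #{f : Fin m → Fin r → Fin n | ∀ v, ∃ i, f v i = α} = (n ^ r - (n - 1) ^ r) ^ m := by
  have h : ({f : Fin m → Fin r → Fin n | ∀ v, ∃ i, f v i = α} : Finset _)
      = Fintype.piFinset fun _ : Fin m => {g : Fin r → Fin n | ∃ i, g i = α} := by
    ext f
    simp
  rw [h, Fintype.card_piFinset_const, card_one_obtains]

/-- A single collector misses a fixed coupon type with probability at least `m ^ (-1/2)`. -/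
lemma inv_sqrt_le_miss (m n r : ℕ) (hn : 2 ≤ n) (hm : 1 ≤ m)
    (hr : (r : ℝ) ≤ (1 / 4) * n * Real.logb 2 m) :
    (Real.sqrt m)⁻¹ ≤ (1 - (n : ℝ)⁻¹) ^ r := by
  have hn' : (2 : ℝ) ≤ n := by exact_mod_cast hn
  have hm' : (1 : ℝ) ≤ m := by exact_mod_cast hm
  have hinv : (n : ℝ)⁻¹ ≤ 2⁻¹ := inv_anti₀ (by norm_num) hn'
  have hpos : 0 < 1 - (n : ℝ)⁻¹ := by linarith
  have hlog2 : 0 < Real.log 2 := Real.log_pos (by norm_num)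
  have hbern : (1 / 2 : ℝ) ≤ (1 - (n : ℝ)⁻¹) ^ ((n : ℝ) / 2) := by
    have h := one_add_mul_self_le_rpow_one_add (s := -(n : ℝ)⁻¹) (by linarith)
      (p := (n : ℝ) / 2) (by linarith)
    have h2 : 1 + (n : ℝ) / 2 * -(n : ℝ)⁻¹ = 1 / 2 := by
      field_simp
      norm_num
    rwa [h2, ← sub_eq_add_neg] at h
  have hlog : -Real.log 2 ≤ (n : ℝ) / 2 * Real.log (1 - (n : ℝ)⁻¹) := by
    have h := Real.log_le_log (by norm_num) hbern
    rwa [Real.log_rpow hpos, one_div, Real.log_inv] at h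
  have hr' : (r : ℝ) * Real.log 2 ≤ (1 / 4) * n * Real.log m := by
    have h := mul_le_mul_of_nonneg_right hr hlog2.le
    rwa [mul_assoc _ (Real.logb 2 m), Real.logb, div_mul_cancel₀ _ hlog2.ne'] at h
  rw [← Real.log_le_log_iff (by positivity) (by positivity), Real.log_inv, Real.log_pow,
    Real.log_sqrt (by positivity)]
  have h3 := mul_le_mul_of_nonneg_left hlog (Nat.cast_nonneg (α := ℝ) r)
  have h4 : (n : ℝ) / 2 * (-(Real.log m / 2)) ≤ n / 2 * (r * Real.log (1 - (n : ℝ)⁻¹)) := by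
    linarith
  exact le_of_mul_le_mul_left h4 (by linarith)

/-- **No-exchange regime, lower bound.**
`m` collectors each draw `r_c` coupons i.i.d. uniformly from `n ≥ 2` types
(uniform measure on `Fin m → Fin r_c → Fin n`, probabilities as counting ratios).
If `r_c ≤ (1/4) n log₂ m`, then for a fixed coupon type `α` the probability that
every collector obtains a copy of `α` is at most `(1 - m^{-1/2})^m ≤ e^{-√m}`;
in particular the probability that every collector obtains a full set of all
`n` coupon types is at most `e^{-√m}`. -/
theorem all_collectors_complete_prob_ub
    (m n r_c : ℕ) (hn : 2 ≤ n) (hm : 1 ≤ m)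
    (hrc : (r_c : ℝ) ≤ (1 / 4) * n * Real.logb 2 m) (α : Fin n) :
    ((univ.filter (fun f : Fin m → Fin r_c → Fin n =>
        ∀ v : Fin m, ∃ i : Fin r_c, f v i = α)).card : ℝ) /
        (Fintype.card (Fin m → Fin r_c → Fin n) : ℝ) ≤ (1 - (Real.sqrt m)⁻¹) ^ m ∧
    (1 - (Real.sqrt m)⁻¹) ^ m ≤ Real.exp (-Real.sqrt m) ∧
    ((univ.filter (fun f : Fin m → Fin r_c → Fin n =>
        ∀ v : Fin m, ∀ β : Fin n, ∃ i : Fin r_c, f v i = β)).card : ℝ) /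
        (Fintype.card (Fin m → Fin r_c → Fin n) : ℝ) ≤ Real.exp (-Real.sqrt m) := by
  have hn' : (2 : ℝ) ≤ n := by exact_mod_cast hn
  have hm' : (1 : ℝ) ≤ m := by exact_mod_cast hm
  have hsq : (1 : ℝ) ≤ Real.sqrt m := Real.one_le_sqrt.mpr hm'
  have hinv : (n : ℝ)⁻¹ ≤ 2⁻¹ := inv_anti₀ (by norm_num) hn'
  have hprob : ((univ.filter (fun f : Fin m → Fin r_c → Fin n =>
        ∀ v : Fin m, ∃ i : Fin r_c, f v i = α)).card : ℝ) /
        (Fintype.card (Fin m → Fin r_c → Fin n) : ℝ) = (1 - (1 - (n : ℝ)⁻¹) ^ r_c) ^ m := by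
    have hn0 : (n : ℝ) ≠ 0 := by linarith
    have hmiss : 1 - (n : ℝ)⁻¹ = (n - 1) / n := by
      field_simp
    rw [card_all_obtain]
    simp only [Fintype.card_pi, Fintype.card_fin, prod_const, card_univ]
    rw [Nat.cast_pow, Nat.cast_pow, Nat.cast_sub (Nat.pow_le_pow_left (Nat.sub_le n 1) r_c),
      Nat.cast_pow, Nat.cast_pow, Nat.cast_pred (by lia), ← div_pow, sub_div,
      div_self (pow_ne_zero _ hn0), hmiss, div_pow]
  have hfirst : ((univ.filter (fun f : Fin m → Fin r_c → Fin n =>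
        ∀ v : Fin m, ∃ i : Fin r_c, f v i = α)).card : ℝ) /
        (Fintype.card (Fin m → Fin r_c → Fin n) : ℝ) ≤ (1 - (Real.sqrt m)⁻¹) ^ m := by
    rw [hprob]
    have hle : (1 - (n : ℝ)⁻¹) ^ r_c ≤ 1 :=
      pow_le_one₀ (by linarith) (by linarith [inv_nonneg.mpr (by linarith : (0 : ℝ) ≤ n)])
    exact pow_le_pow_left₀ (by linarith)
      (by linarith [inv_sqrt_le_miss m n r_c hn hm hrc]) m
  have hsecond : (1 - (Real.sqrt m)⁻¹) ^ m ≤ Real.exp (-Real.sqrt m) := by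
    have hle : (Real.sqrt m)⁻¹ ≤ 1 := inv_le_one_of_one_le₀ hsq
    calc (1 - (Real.sqrt m)⁻¹) ^ m ≤ Real.exp (-(Real.sqrt m)⁻¹) ^ m :=
          pow_le_pow_left₀ (by linarith) (Real.one_sub_le_exp_neg _) m
      _ = Real.exp (-Real.sqrt m) := by
          rw [← Real.exp_nat_mul, mul_neg, ← div_eq_mul_inv, Real.div_sqrt]
  refine ⟨hfirst, hsecond, le_trans ?_ (hfirst.trans hsecond)⟩
  gcongr with f _ v
  exact fun h => h α
end

section
/- Let n ≥ 1 and m ≥ 1 be integers and let N be an integer with N ≥ 16·(m·n + n·ln n). If N coupons are drawn i.i.d. uniformly at random from n coupon types, then with probability at least 1 − 1/n, every coupon type appears at least m times among the N samples. (This is the paper's upper bound for the unlimited-exchange regime r_e = ∞: r_c = O(n + (n log n)/m) samples per collector suffice, since m copies of every coupon among all samples allow unlimited exchanges to complete every collection.) -/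
/-!
An exponential-moment (Chernoff) bound for each type, followed by a union bound over the `n` types.
Write `X_α(f)` for the number of indices `i` with `f i = α`.  The sum of `(1/2) ^ X_α(f)` over all
`f` factorizes over the coordinates and equals `(n - 1/2) ^ N` (`sum_half_pow_count`).  If
`X_α(f) < m` then `(1/2) ^ X_α(f) ≥ (1/2) ^ m`, so at most `2 ^ m * (n - 1/2) ^ N` samples miss the
target for `α`; by `2 ≤ e` and `1 - x ≤ exp (-x)` this is at most
`n ^ N * exp (m - N / (2 n)) ≤ n ^ N / n ^ 2` (`card_few_le`).
-/

open Finset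

lemma sum_half_pow_count (n N : ℕ) (α : Fin n) :
    ∑ f : Fin N → Fin n, (1 / 2 : ℝ) ^ (univ.filter (fun i : Fin N => f i = α)).card
      = ((n : ℝ) - 1 / 2) ^ N := by
  have h1 : ∑ a : Fin n, (if a = α then (1 / 2 : ℝ) else 1) = (n : ℝ) - 1 / 2 := by
    have : ∀ a : Fin n, (if a = α then (1 / 2 : ℝ) else 1) = 1 - if a = α then 1 / 2 else 0 := by
      intro a; split_ifs <;> norm_num
    rw [Finset.sum_congr rfl fun a _ => this a, Finset.sum_sub_distrib]
    simp
  have h2 := Finset.prod_univ_sum (fun _ : Fin N => (univ : Finset (Fin n)))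
    (fun _ a => if a = α then (1 / 2 : ℝ) else 1)
  simp only [h1, Fintype.piFinset_univ, Finset.prod_const, Finset.card_univ,
    Fintype.card_fin] at h2
  rw [h2]
  refine Finset.sum_congr rfl fun f _ => ?_
  rw [Finset.prod_ite]
  simp

/-- Type `α` falls short of `m` copies with probability at most `1 / n ^ 2`. -/
lemma card_few_le (m n N : ℕ) (hn : 1 ≤ n)
    (hN : 16 * ((m : ℝ) * n + n * Real.log n) ≤ N) (α : Fin n) :
    ((univ.filter (fun f : Fin N → Fin n =>
        (univ.filter (fun i : Fin N => f i = α)).card < m)).card : ℝ)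
      ≤ (n : ℝ) ^ N / (n : ℝ) ^ 2 := by
  have hn' : (1 : ℝ) ≤ n := by exact_mod_cast hn
  have hn0 : (0 : ℝ) < n := by linarith
  have hlog : 0 ≤ Real.log n := Real.log_nonneg hn'
  set B := univ.filter (fun f : Fin N → Fin n =>
        (univ.filter (fun i : Fin N => f i = α)).card < m) with hB
  have markov : (B.card : ℝ) * (1 / 2) ^ m ≤ ((n : ℝ) - 1 / 2) ^ N := by
    rw [← sum_half_pow_count n N α, ← nsmul_eq_mul]
    refine (Finset.card_nsmul_le_sum B _ _ fun f hf => ?_).trans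
      (Finset.sum_le_sum_of_subset_of_nonneg (Finset.subset_univ B) fun _ _ _ => by positivity)
    exact pow_le_pow_of_le_one (by norm_num) (by norm_num) (Finset.mem_filter.1 hf).2.le
  have hbase : ((n : ℝ) - 1 / 2) ^ N ≤ (n : ℝ) ^ N * Real.exp (-(N / (2 * n))) := by
    have h : (n : ℝ) - 1 / 2 ≤ n * Real.exp (-(1 / (2 * n))) := by
      have := Real.add_one_le_exp (-(1 / (2 * (n : ℝ))))
      calc (n : ℝ) - 1 / 2 = n * (-(1 / (2 * n)) + 1) := by field_simp; ring
        _ ≤ _ := by gcongr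
    calc ((n : ℝ) - 1 / 2) ^ N ≤ (n * Real.exp (-(1 / (2 * n)))) ^ N :=
          pow_le_pow_left₀ (by linarith) h N
      _ = _ := by
          rw [mul_pow, ← Real.exp_nat_mul]
          congr 2
          ring
  have htwo : (2 : ℝ) ^ m ≤ Real.exp m := by
    rw [← Real.exp_one_pow]
    exact pow_le_pow_left₀ (by norm_num) (by linarith [Real.add_one_le_exp (1 : ℝ)]) m
  have hexp : (m : ℝ) + -(N / (2 * n)) ≤ -(2 * Real.log n) := by
    have : 8 * ((m : ℝ) + Real.log n) ≤ N / (2 * n) := by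
      rw [le_div_iff₀ (by positivity)]
      linarith
    have : (0 : ℝ) ≤ m := m.cast_nonneg
    linarith
  calc (B.card : ℝ) = 2 ^ m * (B.card * (1 / 2) ^ m) := by
        rw [mul_left_comm, ← mul_pow]; norm_num
    _ ≤ Real.exp m * ((n : ℝ) ^ N * Real.exp (-(N / (2 * n)))) := by
        exact mul_le_mul htwo (markov.trans hbase) (by positivity) (by positivity)
    _ = (n : ℝ) ^ N * Real.exp (m + -(N / (2 * n))) := by rw [Real.exp_add]; ring
    _ ≤ (n : ℝ) ^ N * Real.exp (-(2 * Real.log n)) := by gcongr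
    _ = (n : ℝ) ^ N / (n : ℝ) ^ 2 := by
        rw [Real.exp_neg, two_mul, Real.exp_add, Real.exp_log hn0, div_eq_mul_inv, sq]

/-- **Unlimited-exchange regime, upper bound.**
`N` coupons are drawn i.i.d. uniformly from `n ≥ 1` types (uniform measure on
`Fin N → Fin n`, probabilities as counting ratios).  If
`N ≥ 16 (mn + n ln n)`, then with probability at least `1 - 1/n` every coupon
type appears at least `m` times among the `N` samples. -/
theorem unlimited_exchanges_upper
    (m n N : ℕ) (hm : 1 ≤ m) (hn : 1 ≤ n)
    (hN : 16 * ((m : ℝ) * n + n * Real.log n) ≤ N) :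
    1 - 1 / (n : ℝ) ≤
      ((univ.filter (fun f : Fin N → Fin n =>
          ∀ α : Fin n, m ≤ (univ.filter (fun i : Fin N => f i = α)).card)).card : ℝ) /
        (Fintype.card (Fin N → Fin n) : ℝ) := by
  have hn0 : (0 : ℝ) < n := by exact_mod_cast hn
  set P := fun f : Fin N → Fin n =>
    ∀ α : Fin n, m ≤ (univ.filter (fun i : Fin N => f i = α)).card with hP
  have hsplit : ((univ.filter P).card : ℝ) + ((univ.filter fun f => ¬ P f).card : ℝ)
      = (n : ℝ) ^ N := by
    have := Finset.card_filter_add_card_filter_not (s := univ) P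
    rw [Finset.card_univ, Fintype.card_fun, Fintype.card_fin, Fintype.card_fin] at this
    exact_mod_cast this
  have hbad : ((univ.filter fun f => ¬ P f).card : ℝ) ≤ (n : ℝ) ^ N / n := by
    have hsub : (univ.filter fun f => ¬ P f) ⊆ univ.biUnion fun α : Fin n =>
        univ.filter (fun f : Fin N → Fin n =>
          (univ.filter (fun i : Fin N => f i = α)).card < m) := by
      intro f hf
      simpa [hP] using hf
    calc ((univ.filter fun f => ¬ P f).card : ℝ)
        ≤ ∑ α : Fin n, ((univ.filter (fun f : Fin N → Fin n =>
          (univ.filter (fun i : Fin N => f i = α)).card < m)).card : ℝ) := by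
          exact_mod_cast (Finset.card_le_card hsub).trans Finset.card_biUnion_le
      _ ≤ ∑ _α : Fin n, (n : ℝ) ^ N / (n : ℝ) ^ 2 :=
          Finset.sum_le_sum fun α _ => card_few_le m n N hn hN α
      _ = (n : ℝ) ^ N / n := by
          simp
          field_simp
  rw [Fintype.card_fun, Fintype.card_fin, Fintype.card_fin, Nat.cast_pow,
    le_div_iff₀ (by positivity)]
  have : (1 - 1 / (n : ℝ)) * (n : ℝ) ^ N = (n : ℝ) ^ N - (n : ℝ) ^ N / n := by ring
  linarith
end

section
/- Let n ≥ 1 be an integer, fix a coupon type α, and let r_c ≥ n be an integer; write μ = r_c/n. If a single collector draws r_c coupons i.i.d. uniformly at random from n coupon types, then the probability that the collector obtains at most 1 copy of coupon α is at most e^{−(μ−1)²/(2μ)} ≤ e^{1 − μ/2}. -/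
open Finset

/-!
The bound is a Chernoff bound on the number `X` of copies of `α`. For `0 < s ≤ 1`, Markov's
inequality applied to `s ^ X` gives `s * P(X ≤ 1) ≤ E[s ^ X]`, and independence gives
`E[s ^ X] = (1 - (1 - s) / n) ^ r_c ≤ exp (-(1 - s) μ)`. The choice `s = μ⁻¹` yields
`P(X ≤ 1) ≤ μ exp (1 - μ)`, and `log μ ≤ sinh (log μ) = (μ - μ⁻¹) / 2` turns this into
`exp (-(μ - 1) ^ 2 / (2 μ))`.
-/

/-- The generating function of the number of copies of `α`, summed over all samples. -/
lemma sum_pow_copies (n r : ℕ) (α : Fin n) (s : ℝ) :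
    ∑ f : Fin r → Fin n, s ^ (univ.filter (fun i : Fin r => f i = α)).card =
      ((n : ℝ) - (1 - s)) ^ r := by
  have h : ∑ j : Fin n, (if j = α then s else 1) = (n : ℝ) - (1 - s) := by
    have h1 : ∀ j : Fin n, (if j = α then s else 1) = 1 - (if j = α then 1 - s else 0) := by
      intro j
      split_ifs <;> ring
    simp only [h1, sum_sub_distrib, sum_ite_eq', mem_univ, if_true]
    simp
  rw [← h, Fintype.sum_pow]
  refine sum_congr rfl fun f _ => ?_
  rw [prod_ite]
  simp

/-- Markov's inequality for `s ^ X`, in counting form. -/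
lemma mul_card_le_sum_pow (n r : ℕ) (α : Fin n) (s : ℝ) (hs0 : 0 ≤ s) (hs1 : s ≤ 1) :
    s * ((univ.filter (fun f : Fin r → Fin n =>
        (univ.filter (fun i : Fin r => f i = α)).card ≤ 1)).card : ℝ) ≤
      ∑ f : Fin r → Fin n, s ^ (univ.filter (fun i : Fin r => f i = α)).card := by
  rw [mul_comm, ← nsmul_eq_mul, ← sum_const]
  calc _ ≤ ∑ f ∈ univ.filter (fun f : Fin r → Fin n =>
          (univ.filter (fun i : Fin r => f i = α)).card ≤ 1),
          s ^ (univ.filter (fun i : Fin r => f i = α)).card := by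
        refine sum_le_sum fun f hf => ?_
        simpa using pow_le_pow_of_le_one hs0 hs1 (mem_filter.mp hf).2
    _ ≤ _ := sum_le_sum_of_subset_of_nonneg (filter_subset _ _)
        fun f _ _ => pow_nonneg hs0 _

/-- A single collector draws `r_c ≥ n` coupons i.i.d. uniformly from `n ≥ 1`
types (uniform measure on `Fin r_c → Fin n`, probabilities as counting ratios).
With `μ = r_c / n`, the probability that the collector obtains at most one copy
of a fixed coupon type `α` is at most `e^{-(μ-1)²/(2μ)} ≤ e^{1 - μ/2}`. -/
theorem at_most_one_copy_prob
    (n r_c : ℕ) (hn : 1 ≤ n) (hrc : n ≤ r_c) (α : Fin n)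
    (μ : ℝ) (hμ : μ = (r_c : ℝ) / n) :
    ((univ.filter (fun f : Fin r_c → Fin n =>
        (univ.filter (fun i : Fin r_c => f i = α)).card ≤ 1)).card : ℝ) /
        (Fintype.card (Fin r_c → Fin n) : ℝ) ≤ Real.exp (-((μ - 1) ^ 2 / (2 * μ))) ∧
    Real.exp (-((μ - 1) ^ 2 / (2 * μ))) ≤ Real.exp (1 - μ / 2) := by
  have hn0 : (0 : ℝ) < n := by exact_mod_cast hn
  have hn1 : (1 : ℝ) ≤ n := by exact_mod_cast hn
  have hμ1 : 1 ≤ μ := by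
    rw [hμ, le_div_iff₀ hn0, one_mul]
    exact_mod_cast hrc
  have hμ0 : 0 < μ := by linarith
  have hexp : -((μ - 1) ^ 2 / (2 * μ)) = 1 - μ / 2 - μ⁻¹ / 2 := by
    field_simp
    ring
  have hinv : 0 < μ⁻¹ := inv_pos.mpr hμ0
  have hinv1 : μ⁻¹ ≤ 1 := inv_le_one_of_one_le₀ hμ1
  refine ⟨?_, Real.exp_le_exp.mpr (by rw [hexp]; linarith)⟩
  have hmarkov := mul_card_le_sum_pow n r_c α μ⁻¹ hinv.le hinv1
  rw [sum_pow_copies, inv_mul_le_iff₀ hμ0] at hmarkov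
  have hpow : ((n : ℝ) - (1 - μ⁻¹)) ^ r_c ≤ Real.exp (1 - μ) * (n : ℝ) ^ r_c := by
    have h1 : (n : ℝ) - (1 - μ⁻¹) ≤ Real.exp (-(1 - μ⁻¹) / n) * n := by
      have h2 := mul_le_mul_of_nonneg_right (Real.add_one_le_exp (-(1 - μ⁻¹) / n)) hn0.le
      rw [add_mul, div_mul_cancel₀ _ hn0.ne'] at h2
      linarith
    have h3 : (r_c : ℝ) * (-(1 - μ⁻¹) / n) = 1 - μ := by
      have h4 : (r_c : ℝ) = μ * n := by rw [hμ, div_mul_cancel₀ _ hn0.ne']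
      rw [h4]
      field_simp
      ring
    calc _ ≤ (Real.exp (-(1 - μ⁻¹) / n) * n) ^ r_c :=
          pow_le_pow_left₀ (by linarith) h1 _
      _ = _ := by rw [mul_pow, ← Real.exp_nat_mul, h3]
  have hlog : Real.log μ ≤ (μ - μ⁻¹) / 2 := by
    rw [← Real.sinh_log hμ0]
    exact Real.self_le_sinh_iff.mpr (Real.log_nonneg hμ1)
  have hfin : μ * Real.exp (1 - μ) ≤ Real.exp (-((μ - 1) ^ 2 / (2 * μ))) := by
    nth_rewrite 1 [← Real.exp_log hμ0]
    rw [← Real.exp_add, hexp, Real.exp_le_exp]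
    linarith
  have hcard : (Fintype.card (Fin r_c → Fin n) : ℝ) = (n : ℝ) ^ r_c := by simp
  rw [hcard, div_le_iff₀ (by positivity)]
  calc _ ≤ μ * ((n : ℝ) - (1 - μ⁻¹)) ^ r_c := hmarkov
    _ ≤ μ * (Real.exp (1 - μ) * (n : ℝ) ^ r_c) := by gcongr
    _ = μ * Real.exp (1 - μ) * (n : ℝ) ^ r_c := by ring
    _ ≤ _ := by gcongr
end

section
/- Let n ≥ 1 and m ≥ 1 be integers, fix a coupon type α, and let r_c be an integer with r_c ≥ 36·(n + (n·ln n)/m). If each of m collectors independently draws r_c coupons i.i.d. uniformly at random from n coupon types, then the probability that at least ⌈m/3⌉ of the collectors obtain at most 1 copy of coupon α is at most e^{−(r_c·m)/(9n)} ≤ e^{−4(m + ln n)}. -/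
/-!
The proof is an exponential-moment (Chernoff) argument applied twice. Write `x = r_c / n`, so that
`x ≥ 36`. If `N` is the number of copies of `α` obtained by one collector, then
`1[N ≤ 1] ≤ 4 · (1/4)^N`, and `E[(1/4)^N] = (1 - 3/(4n))^{r_c} ≤ e^{-3x/4}`
(`sum_quarter_pow_copies_le`), so a collector is bad with probability at most `4 e^{-3x/4}`.
With `B` the number of bad collectors, independence gives
`E[e^{(x/2) B}] ≤ (1 + 4 e^{x/2} e^{-3x/4})^m ≤ 2^m ≤ e^{xm/18}`, and Markov's inequality at level
`B ≥ m/3` yields `e^{xm/18 - xm/6} = e^{-xm/9}`. Both steps are carried out with a single weight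
`∏ v, (1 + 4 e^{x/2} (1/4)^{N_v})`, which dominates `e^{(x/2) B}` pointwise
(`exp_mul_card_bad_le_prod`). The second inequality is the hypothesis on `r_c`, rearranged.
-/

open Finset

/-- Bound on the generating function of the number of copies of `α` at `1/4`, which factors over
the rounds as `(n - 3/4) ^ r`. -/
lemma sum_quarter_pow_copies_le (n r : ℕ) (hn : 1 ≤ n) (α : Fin n) :
    ∑ g : Fin r → Fin n, (1 / 4 : ℝ) ^ (univ.filter (fun i : Fin r => g i = α)).card ≤
      (n : ℝ) ^ r * Real.exp (-(3 / 4 * ((r : ℝ) / n))) := by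
  have hn' : (1 : ℝ) ≤ n := by exact_mod_cast hn
  have h1 : ∑ g : Fin r → Fin n, (1 / 4 : ℝ) ^ (univ.filter (fun i : Fin r => g i = α)).card
      = (∑ a : Fin n, if a = α then (1 / 4 : ℝ) else 1) ^ r := by
    rw [Fintype.sum_pow]
    refine Finset.sum_congr rfl fun g _ => ?_
    rw [Finset.prod_ite]
    simp
  have h2 : (∑ a : Fin n, if a = α then (1 / 4 : ℝ) else 1) = n - 3 / 4 := by
    have : ∀ a : Fin n, (if a = α then (1 / 4 : ℝ) else 1) = 1 - if a = α then 3 / 4 else 0 := by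
      intro a
      split_ifs <;> norm_num
    simp only [this, Finset.sum_sub_distrib]
    simp
  have h3 : (n : ℝ) - 3 / 4 ≤ n * Real.exp (-(3 / (4 * n))) := by
    have := Real.add_one_le_exp (-(3 / (4 * (n : ℝ))))
    calc (n : ℝ) - 3 / 4 = n * (-(3 / (4 * n)) + 1) := by field_simp; ring
      _ ≤ _ := by gcongr
  rw [h1, h2]
  calc ((n : ℝ) - 3 / 4) ^ r ≤ (n * Real.exp (-(3 / (4 * n)))) ^ r :=
        pow_le_pow_left₀ (by linarith) h3 r
    _ = _ := by
        rw [mul_pow, ← Real.exp_nat_mul]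
        congr 2
        field_simp

/-- Pointwise domination of the exponential of the number of bad collectors by a product of
weights, one for each collector; `N v` plays the role of the number of copies. -/
lemma exp_mul_card_bad_le_prod {m : ℕ} (s : ℝ) (N : Fin m → ℕ) :
    Real.exp (s * ((univ.filter (fun v : Fin m => N v ≤ 1)).card : ℝ)) ≤
      ∏ v, (1 + 4 * Real.exp s * (1 / 4 : ℝ) ^ N v) := by
  have h : Real.exp (s * ((univ.filter (fun v : Fin m => N v ≤ 1)).card : ℝ)) =
      ∏ v, if N v ≤ 1 then Real.exp s else 1 := by
    rw [Finset.prod_ite, mul_comm, Real.exp_nat_mul]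
    simp
  rw [h]
  refine Finset.prod_le_prod (fun v _ => by split_ifs <;> positivity) fun v _ => ?_
  have he := Real.exp_pos s
  split_ifs with hv
  · have : (1 / 4 : ℝ) ≤ (1 / 4 : ℝ) ^ N v := by
      simpa using pow_le_pow_of_le_one (by norm_num : (0 : ℝ) ≤ 1 / 4) (by norm_num) hv
    nlinarith
  · have : 0 ≤ 4 * Real.exp s * (1 / 4 : ℝ) ^ N v := by positivity
    linarith

/-- `m ≥ 1` collectors each draw `r_c` coupons i.i.d. uniformly from `n ≥ 1`
types (uniform measure on `Fin m → Fin r_c → Fin n`, probabilities as counting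
ratios).  If `r_c ≥ 36 (n + n ln n / m)`, then for a fixed coupon type `α`, the
probability that at least `⌈m/3⌉` collectors (equivalently, at least `m/3`
collectors, as the count is an integer) obtain at most one copy of `α` is at
most `e^{-r_c m/(9n)} ≤ e^{-4(m + ln n)}`. -/
theorem many_bad_collectors_prob
    (m n r_c : ℕ) (hm : 1 ≤ m) (hn : 1 ≤ n)
    (hrc : 36 * ((n : ℝ) + (n : ℝ) * Real.log n / m) ≤ r_c) (α : Fin n) :
    ((univ.filter (fun f : Fin m → Fin r_c → Fin n =>
        (m : ℝ) / 3 ≤ ((univ.filter (fun v : Fin m =>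
          (univ.filter (fun i : Fin r_c => f v i = α)).card ≤ 1)).card : ℝ))).card : ℝ) /
        (Fintype.card (Fin m → Fin r_c → Fin n) : ℝ) ≤
      Real.exp (-((r_c : ℝ) * m / (9 * n))) ∧
    Real.exp (-((r_c : ℝ) * m / (9 * n))) ≤ Real.exp (-(4 * ((m : ℝ) + Real.log n))) := by
  have hn' : (1 : ℝ) ≤ n := by exact_mod_cast hn
  have hm' : (1 : ℝ) ≤ m := by exact_mod_cast hm
  have hlog : 0 ≤ Real.log n := Real.log_nonneg hn'
  obtain ⟨x, hx⟩ : ∃ x : ℝ, x = (r_c : ℝ) / n := ⟨_, rfl⟩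
  have hxl : 36 * (1 + Real.log n / m) ≤ x := by
    rw [hx, le_div_iff₀ (by linarith)]
    calc 36 * (1 + Real.log n / m) * n = 36 * ((n : ℝ) + (n : ℝ) * Real.log n / m) := by ring
      _ ≤ r_c := hrc
  have hx36 : 36 ≤ x := by
    have : 0 ≤ Real.log n / m := by positivity
    linarith
  have hexp : (r_c : ℝ) * m / (9 * n) = x * m / 9 := by
    rw [hx]
    field_simp
  rw [hexp]
  constructor
  · set S := univ.filter (fun f : Fin m → Fin r_c → Fin n =>
        (m : ℝ) / 3 ≤ ((univ.filter (fun v : Fin m =>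
          (univ.filter (fun i : Fin r_c => f v i = α)).card ≤ 1)).card : ℝ)) with hS
    have hcard : (Fintype.card (Fin m → Fin r_c → Fin n) : ℝ) = ((n : ℝ) ^ r_c) ^ m := by
      simp
    rw [hcard, div_le_iff₀ (by positivity)]
    have hmarkov : (S.card : ℝ) * Real.exp (x / 2 * (m / 3)) ≤
        ∑ f : Fin m → Fin r_c → Fin n, ∏ v, (1 + 4 * Real.exp (x / 2) *
          (1 / 4 : ℝ) ^ (univ.filter (fun i : Fin r_c => f v i = α)).card) := by
      rw [← nsmul_eq_mul, ← Finset.sum_const]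
      refine (Finset.sum_le_sum fun f hf => ?_).trans
        (Finset.sum_le_sum_of_subset_of_nonneg (Finset.subset_univ S) fun f _ _ =>
          Finset.prod_nonneg fun v _ => by positivity)
      refine le_trans ?_ (exp_mul_card_bad_le_prod (x / 2)
        fun v => (univ.filter (fun i : Fin r_c => f v i = α)).card)
      have hf' := (Finset.mem_filter.mp hf).2
      gcongr
    -- The sum over all outcomes factors over the collectors.
    have hfac := Fintype.sum_pow (fun g : Fin r_c → Fin n => 1 + 4 * Real.exp (x / 2) *
          (1 / 4 : ℝ) ^ (univ.filter (fun i : Fin r_c => g i = α)).card) m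
    rw [← hfac] at hmarkov
    have hone : ∑ g : Fin r_c → Fin n, (1 + 4 * Real.exp (x / 2) *
          (1 / 4 : ℝ) ^ (univ.filter (fun i : Fin r_c => g i = α)).card) ≤
        (n : ℝ) ^ r_c * Real.exp (x / 18) := by
      rw [Finset.sum_add_distrib, ← Finset.mul_sum]
      have hgen := sum_quarter_pow_copies_le n r_c hn α
      rw [← hx] at hgen
      have hmul : Real.exp (x / 2) * Real.exp (-(3 / 4 * x)) ≤ 1 / 4 := by
        rw [← Real.exp_add, show x / 2 + -(3 / 4 * x) = -(x / 4) by ring, Real.exp_neg, one_div]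
        have := Real.add_one_le_exp (x / 4)
        exact inv_anti₀ (by norm_num) (by linarith)
      have h18 := Real.add_one_le_exp (x / 18)
      calc _ ≤ (n : ℝ) ^ r_c + 4 * Real.exp (x / 2) *
              ((n : ℝ) ^ r_c * Real.exp (-(3 / 4 * x))) := by
            gcongr
            simp
        _ = (n : ℝ) ^ r_c * (1 + 4 * (Real.exp (x / 2) * Real.exp (-(3 / 4 * x)))) := by ring
        _ ≤ _ := by
            gcongr
            linarith
    have hall : (S.card : ℝ) * Real.exp (x / 2 * (m / 3)) ≤
        ((n : ℝ) ^ r_c) ^ m * Real.exp (m * (x / 18)) := by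
      rw [Real.exp_nat_mul, ← mul_pow]
      exact hmarkov.trans (pow_le_pow_left₀ (Finset.sum_nonneg fun g _ => by positivity) hone m)
    rw [← le_div_iff₀ (Real.exp_pos _), mul_div_assoc, ← Real.exp_sub] at hall
    rw [mul_comm]
    convert hall using 3
    ring
  · rw [Real.exp_le_exp, neg_le_neg_iff]
    have : 36 * (1 + Real.log n / m) * m ≤ x * m := by gcongr
    have h2 : 36 * (1 + Real.log n / m) * m = 36 * (m + Real.log n) := by field_simp
    linarith
end

section
/- Let m ≥ 1 be an integer and let c₀ : Fin m → ℕ be an initial assignment of copy-counts (of a single fixed coupon type) to m collectors such that the number of collectors v with c₀ v ≤ 1 is strictly less than m/3. Define a 'move' from counts c to counts c' as: there exist distinct collectors u, v with c u ≥ 2 and c v = 0, and c' u = c u − 1, c' v = 1, and c' w = c w for all other w. Then for any finite sequence of moves starting from c₀, the resulting counts c satisfy: the number of collectors v with c v ≥ 2 is at least m/3, and no collector's count is ever 0 after having been positive. (This is the invariant underlying the exchanging-phase analysis of Theorem 1.) -/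
/-!
Give a collector holding `k` copies the deficit `2 - k` (truncated: `2`, `1`, `0` for `k = 0`,
`k = 1`, `k ≥ 2`). A move lowers the deficit of the receiver from `2` to `1` and raises that of
the giver by at most `1`, so the total deficit never increases (`deficit_le_of_move`). The total
deficit lies between the number of collectors with at most one copy and twice that number; hence
the former stays at most `2 * #{v | c₀ v ≤ 1} < 2m/3`, leaving at least `m/3` collectors with two
or more copies. Positivity is preserved because a giver keeps at least one copy.
-/

open Finset

/-- A `move` on copy-counts `c : Fin m → ℕ` of a single fixed coupon type:
some collector `u` holding at least two copies gives one copy to a collector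
`v` holding zero copies. -/
def Move (m : ℕ) (c c' : Fin m → ℕ) : Prop :=
  ∃ u v : Fin m, u ≠ v ∧ 2 ≤ c u ∧ c v = 0 ∧
    c' u = c u - 1 ∧ c' v = 1 ∧ ∀ w : Fin m, w ≠ u → w ≠ v → c' w = c w

/-- The total deficit: the least number of copies still needed for every collector to hold two.
Truncated subtraction is intended, so that surplus copies do not compensate for missing ones. -/
def deficit {m : ℕ} (c : Fin m → ℕ) : ℕ := ∑ w, (2 - c w)

lemma deficit_le_of_move {m : ℕ} {c c' : Fin m → ℕ} (h : Move m c c') :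
    deficit c' ≤ deficit c := by
  obtain ⟨u, v, huv, hu, hv, hu', hv', hw⟩ := h
  -- The loss at the receiver `v` and the largest possible gain at the giver `u`, pointwise.
  have key : ∀ w ∈ (univ : Finset (Fin m)),
      (2 - c' w) + (if w = v then 1 else 0) ≤ (2 - c w) + (if w = u then 1 else 0) := by
    intro w _
    by_cases h1 : w = u
    · subst h1
      simp only [if_neg huv, if_true]
      omega
    · by_cases h2 : w = v
      · subst h2
        simp only [if_neg h1, if_true]
        omega
      · simp [h1, h2, hw w h1 h2]
  have hsum := Finset.sum_le_sum key
  simp only [Finset.sum_add_distrib, Finset.sum_ite_eq', Finset.mem_univ, if_true] at hsum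
  unfold deficit
  omega

lemma card_le_deficit {m : ℕ} (c : Fin m → ℕ) :
    (univ.filter (fun v : Fin m => c v ≤ 1)).card ≤ deficit c := by
  rw [Finset.card_filter]
  refine Finset.sum_le_sum fun w _ => ?_
  split_ifs <;> omega

lemma deficit_le_two_mul_card {m : ℕ} (c : Fin m → ℕ) :
    deficit c ≤ 2 * (univ.filter (fun v : Fin m => c v ≤ 1)).card := by
  rw [Finset.card_filter, Finset.mul_sum]
  refine Finset.sum_le_sum fun w _ => ?_
  split_ifs <;> omega

lemma deficit_le_of_moves {m : ℕ} {c c' : Fin m → ℕ}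
    (h : Relation.ReflTransGen (Move m) c c') : deficit c' ≤ deficit c := by
  induction h with
  | refl => exact le_rfl
  | tail _ hmove ih => exact (deficit_le_of_move hmove).trans ih

lemma pos_of_move {m : ℕ} {c c' : Fin m → ℕ} (h : Move m c c') {w : Fin m} (hpos : 0 < c w) :
    0 < c' w := by
  obtain ⟨u, v, huv, hu, hv, hu', hv', hw⟩ := h
  by_cases h1 : w = u
  · subst h1
    omega
  · by_cases h2 : w = v
    · subst h2
      omega
    · rwa [hw w h1 h2]

/-- **Invariant of the exchanging phase.**
If initially fewer than `m/3` collectors hold at most one copy, then after any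
finite sequence of moves (reflexive-transitive closure of `Move`): at least
`m/3` collectors hold at least two copies, and no collector's count ever drops
to `0` after having been positive. -/
theorem exchange_invariant
    (m : ℕ) (hm : 1 ≤ m) (c₀ : Fin m → ℕ)
    (h₀ : ((univ.filter (fun v : Fin m => c₀ v ≤ 1)).card : ℝ) < (m : ℝ) / 3) :
    (∀ c : Fin m → ℕ, Relation.ReflTransGen (Move m) c₀ c →
      (m : ℝ) / 3 ≤ ((univ.filter (fun v : Fin m => 2 ≤ c v)).card : ℝ)) ∧
    (∀ c c' : Fin m → ℕ, Relation.ReflTransGen (Move m) c₀ c →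
      Relation.ReflTransGen (Move m) c c' →
      ∀ v : Fin m, 0 < c v → 0 < c' v) := by
  refine ⟨fun c hc => ?_, fun c c' _ hcc' v hv => ?_⟩
  · have hlow : (univ.filter (fun v : Fin m => c v ≤ 1)).card ≤
        2 * (univ.filter (fun v : Fin m => c₀ v ≤ 1)).card :=
      (card_le_deficit c).trans ((deficit_le_of_moves hc).trans (deficit_le_two_mul_card c₀))
    have hsplit : (univ.filter (fun v : Fin m => c v ≤ 1)).card +
        (univ.filter (fun v : Fin m => 2 ≤ c v)).card = m := by
      have h := Finset.card_filter_add_card_filter_not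
        (s := (univ : Finset (Fin m))) (fun v => c v ≤ 1)
      simpa [Nat.lt_iff_add_one_le] using h
    have hlow' : ((univ.filter (fun v : Fin m => c v ≤ 1)).card : ℝ) ≤
        2 * ((univ.filter (fun v : Fin m => c₀ v ≤ 1)).card : ℝ) := by exact_mod_cast hlow
    have hsplit' : ((univ.filter (fun v : Fin m => c v ≤ 1)).card : ℝ) +
        ((univ.filter (fun v : Fin m => 2 ≤ c v)).card : ℝ) = m := by exact_mod_cast hsplit
    linarith
  · induction hcc' with
    | refl => exact hv
    | tail _ hmove ih => exact pos_of_move hmove ih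
end

section
/- Let m ≥ 4 and n ≥ 2 be integers and let r_e be an integer with 0 ≤ r_e ≤ (1/8)·m·log₂ n. If r_e unordered pairs of distinct collectors are drawn i.i.d. uniformly at random from m collectors, then for any fixed collector v, the probability that v belongs to none of the r_e pairs is at least (1 − 2/m)^{r_e} ≥ n^{−1/2}. (This is the key step in the paper's lower bound showing r_e = Ω(m log n) interactions are necessary to succeed with probability 1 − 1/n when r_c ≤ (1/4)·n·ln n.) -/
/-!
At most `m - 1` of the `m.choose 2` pairs contain `v`, since
each of them is determined by the partner of `v`; hence at least a fraction `1 - 2 / m` of the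
pairs avoids `v`. The sequences avoiding `v` form a product set, so independence gives the power
`(1 - 2 / m) ^ r_e`.

For the second bound, Bernoulli's inequality for the exponent `4 / m ≤ 1` gives
`(1 / 2) ^ (4 / m) ≤ 1 - 2 / m`. Raising this to the power `r_e` and using
`4 * r_e / m ≤ (logb 2 n) / 2` bounds the power below by `(1 / 2) ^ ((logb 2 n) / 2) = n ^ (-1 / 2)`.
-/

open Finset

/-- An interaction: an unordered pair of two distinct collectors from `Fin m`. -/
abbrev Pair (m : ℕ) : Type := {p : Sym2 (Fin m) // ¬ p.IsDiag}

/-- A pair containing `v` is determined by its other element, which leaves at most `m - 1` pairs. -/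
lemma card_pairs_mem_le (m : ℕ) (v : Fin m) :
    (univ.filter (fun p : Pair m => v ∈ p.1)).card ≤ m - 1 := by
  let f : {w : Fin m // w ≠ v} → Pair m :=
    fun w => ⟨s(v, w.1), by simpa using w.2.symm⟩
  have hsub : univ.filter (fun p : Pair m => v ∈ p.1) ⊆ univ.image f := by
    rintro ⟨p, hp⟩ h
    obtain ⟨w, rfl⟩ : ∃ w, p = s(v, w) := (mem_filter.1 h).2
    have hw : w ≠ v := by
      rintro rfl
      simp at hp
    exact mem_image.2 ⟨⟨w, hw⟩, mem_univ _, rfl⟩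
  calc _ ≤ _ := card_le_card hsub
    _ ≤ _ := card_image_le
    _ = m - 1 := by simp [Fintype.card_subtype_compl]

lemma one_sub_two_div_le_pair_ratio (m : ℕ) (hm : 2 ≤ m) (v : Fin m) :
    1 - 2 / (m : ℝ) ≤ ((univ.filter (fun p : Pair m => v ∉ p.1)).card : ℝ) /
      (Fintype.card (Pair m) : ℝ) := by
  have hcard : (Fintype.card (Pair m) : ℝ) = m * (m - 1) / 2 := by
    rw [Sym2.card_subtype_not_diag, Fintype.card_fin, Nat.cast_choose_two]
  have hsum := card_filter_add_card_filter_not (s := (univ : Finset (Pair m)))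
    (fun p : Pair m => v ∈ p.1)
  have hle := card_pairs_mem_le m v
  rw [card_univ] at hsum
  have hsum' : ((univ.filter (fun p : Pair m => v ∈ p.1)).card : ℝ) +
      (univ.filter (fun p : Pair m => v ∉ p.1)).card = m * (m - 1) / 2 := by
    rw [← hcard]
    exact_mod_cast hsum
  have hle' : ((univ.filter (fun p : Pair m => v ∈ p.1)).card : ℝ) ≤ m - 1 := by
    have : ((m - 1 : ℕ) : ℝ) = m - 1 := by
      rw [Nat.cast_sub (by omega), Nat.cast_one]
    rw [← this]
    exact_mod_cast hle
  have hm' : (2 : ℝ) ≤ m := by exact_mod_cast hm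
  have hm1 : (0 : ℝ) < m - 1 := by linarith
  rw [hcard, le_div_iff₀ (by positivity)]
  have : (1 - 2 / (m : ℝ)) * (m * (m - 1) / 2) = m * (m - 1) / 2 - (m - 1) := by
    field_simp
  linarith

/-- Bernoulli's inequality `(1 + s) ^ p ≤ 1 + p * s` at `s = -1 / 2` and `p = 4 / m`. -/
lemma half_rpow_le_one_sub_two_div (m : ℕ) (hm : 4 ≤ m) :
    (1 / 2 : ℝ) ^ (4 / (m : ℝ)) ≤ 1 - 2 / (m : ℝ) := by
  have hm' : (4 : ℝ) ≤ m := by exact_mod_cast hm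
  have h := rpow_one_add_le_one_add_mul_self (s := -1 / 2) (p := 4 / (m : ℝ))
    (by norm_num) (by positivity) (by rw [div_le_one (by linarith)]; exact hm')
  have e : (1 : ℝ) + -1 / 2 = 1 / 2 := by norm_num
  rw [e] at h
  calc _ ≤ _ := h
    _ = _ := by ring

/-- **Lower bound ingredient for `r_e = Ω(m log n)`.**
`r_e` unordered pairs of distinct collectors are drawn i.i.d. uniformly at
random from `m ≥ 4` collectors (uniform measure on `Fin r_e → Pair m`,
probabilities as counting ratios).  If `n ≥ 2` and `r_e ≤ (1/8) m log₂ n`, then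
for any fixed collector `v` the probability that `v` belongs to none of the
`r_e` pairs is at least `(1 - 2/m)^{r_e} ≥ n^{-1/2}`. -/
theorem lonely_collector_prob
    (m n r_e : ℕ) (hm : 4 ≤ m) (hn : 2 ≤ n)
    (hre : (r_e : ℝ) ≤ (1 / 8) * m * Real.logb 2 n) (v : Fin m) :
    (1 - 2 / (m : ℝ)) ^ r_e ≤
      ((univ.filter (fun σ : Fin r_e → Pair m =>
          ∀ i : Fin r_e, v ∉ (σ i).1)).card : ℝ) /
        (Fintype.card (Fin r_e → Pair m) : ℝ) ∧
    (Real.sqrt n)⁻¹ ≤ (1 - 2 / (m : ℝ)) ^ r_e := by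
  have hm' : (4 : ℝ) ≤ m := by exact_mod_cast hm
  have hn' : (0 : ℝ) < n := by
    have : 0 < n := by omega
    exact_mod_cast this
  constructor
  · have hprod : univ.filter (fun σ : Fin r_e → Pair m => ∀ i : Fin r_e, v ∉ (σ i).1) =
        Fintype.piFinset (fun _ => univ.filter (fun p : Pair m => v ∉ p.1)) := by
      ext σ
      simp
    have h0 : 0 ≤ 1 - 2 / (m : ℝ) :=
      (Real.rpow_nonneg (by norm_num) _).trans (half_rpow_le_one_sub_two_div m hm)
    rw [hprod, Fintype.card_piFinset_const, Fintype.card_fun, Fintype.card_fin]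
    push_cast
    rw [← div_pow]
    exact pow_le_pow_left₀ h0 (one_sub_two_div_le_pair_ratio m (by omega) v) _
  · have hexp : 4 / (m : ℝ) * r_e ≤ Real.logb 2 n * (1 / 2) := by
      rw [div_mul_eq_mul_div, div_le_iff₀ (by linarith)]
      linarith
    calc (Real.sqrt n)⁻¹ = (1 / 2 : ℝ) ^ (Real.logb 2 n * (1 / 2)) := by
          rw [one_div, Real.inv_rpow (by norm_num), Real.rpow_mul (by norm_num),
            Real.rpow_logb (by norm_num) (by norm_num) hn', Real.sqrt_eq_rpow, one_div]
      _ ≤ (1 / 2 : ℝ) ^ (4 / (m : ℝ) * r_e) :=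
          Real.rpow_le_rpow_of_exponent_ge (by norm_num) (by norm_num) hexp
      _ = ((1 / 2 : ℝ) ^ (4 / (m : ℝ))) ^ r_e := by
          rw [Real.rpow_mul (by norm_num), Real.rpow_natCast]
      _ ≤ (1 - 2 / (m : ℝ)) ^ r_e :=
          pow_le_pow_left₀ (Real.rpow_nonneg (by norm_num) _)
            (half_rpow_le_one_sub_two_div m hm) _
end
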